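/- arXiv:1708.04309 — 2 statements merged into one kernel-verified Lean document; each statement's English description precedes it below -/
import Mathlib

section
/- Let κ ≥ 1. There exists a constant C > 0, depending only on κ, with the following property. Let (X,d) be a proper geodesic metric space, ν a Radon measure on X, z ∈ X, s > 0 and δ > 0. Let F : X → [0,∞) be a Borel function satisfying (1/ν(B_s(z))) ∫_{B_s(z)} F dν ≤ δ, and assume 0 < ν(B_{2t}(w)) ≤ 2^κ ν(B_t(w)) for every w ∈ B_s(z) and every 0 < t ≤ s. Then there exists a compact set K ⊆ \bar B_{s/100}(z) with ν(K) ≥ (1 − C√δ) · ν(B_{s/100}(z)) such that for every x ∈ K and every 0 < t ≤ s/100 one has (1/ν(B_t(x))) ∫_{B_t(x)} F dν ≤ C√δ. -/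
open MeasureTheory Metric
open scoped ENNReal

/-!
The balls centred near `z` on which the mean of `F` exceeds a threshold `c` cover only a small set:
by the Vitali covering lemma, enlargements of disjoint ones among them cover it, and doubling
bounds its measure by `c⁻¹` times the total mass of `F`, up to a constant. Since that mass is at
most `δ * ν (ball z s)`, and `ν (ball z s)` is comparable to `ν (ball z (s / 100))`, the measure of
this set is at most a fraction `A * δ / c` of that of the small ball, with `A` a power of the
doubling constant. Taking `c = √(A * δ)` makes this fraction equal to the threshold itself.
-/

section PseudoMetric

variable {X : Type*} [PseudoMetricSpace X] [MeasurableSpace X]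

/-- The measure `ν` is doubling with constant `A` on the balls with centre in `S` and radius at
most `R`; the doubled balls may leave `S` and have radius up to `2 * R`. -/
def IsDoublingOn (ν : Measure X) (A : ℝ≥0∞) (S : Set X) (R : ℝ) : Prop :=
  ∀ w ∈ S, ∀ t : ℝ, 0 < t → t ≤ R → ν (ball w (2 * t)) ≤ A * ν (ball w t)

namespace IsDoublingOn

variable {ν : Measure X} {A : ℝ≥0∞} {S S' : Set X} {R R' : ℝ}

theorem mono (hν : IsDoublingOn ν A S R) (hS : S' ⊆ S) (hR : R' ≤ R) :
    IsDoublingOn ν A S' R' :=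
  fun w hw t ht htR => hν w (hS hw) t ht (htR.trans hR)

theorem measure_ball_two_pow_mul_le (hν : IsDoublingOn ν A S R) {w : X} (hw : w ∈ S)
    {t : ℝ} (ht : 0 < t) (n : ℕ) (hn : 2 ^ n * t ≤ 2 * R) :
    ν (ball w (2 ^ n * t)) ≤ A ^ n * ν (ball w t) := by
  induction n with
  | zero => simp
  | succ n ih =>
    rw [pow_succ', mul_assoc] at hn
    have hpos : 0 < 2 ^ n * t := by positivity
    calc ν (ball w (2 ^ (n + 1) * t)) = ν (ball w (2 * (2 ^ n * t))) := by
          rw [pow_succ', mul_assoc]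
      _ ≤ A * ν (ball w (2 ^ n * t)) := hν w hw _ hpos (by linarith)
      _ ≤ A * (A ^ n * ν (ball w t)) := by gcongr; exact ih (by linarith)
      _ = A ^ (n + 1) * ν (ball w t) := by rw [pow_succ', mul_assoc]

end IsDoublingOn

theorem mul_measure_biUnion_ball_le_of_enlargement [OpensMeasurableSpace X]
    [TopologicalSpace.SeparableSpace X] {μ ν : Measure X} {c : ℝ≥0∞} {ι : Type*} {T : Set ι}
    {x : ι → X} {r : ι → ℝ} {R τ : ℝ} (hτ : 3 < τ) (hr : ∀ a ∈ T, r a ∈ Set.Ioc 0 R)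
    (h : ∀ a ∈ T, c * ν (ball (x a) (τ * r a)) ≤ μ (ball (x a) (r a))) :
    c * ν (⋃ a ∈ T, ball (x a) (r a)) ≤ μ (⋃ a ∈ T, ball (x a) (r a)) := by
  obtain ⟨u, huT, hdisj, hcov⟩ :=
    Vitali.exists_disjoint_subfamily_covering_enlargement_ball T x r R (fun a ha => (hr a ha).2)
      τ hτ
  have hu : u.Countable := hdisj.countable_of_isOpen (fun _ _ => isOpen_ball)
    fun a ha => nonempty_ball.2 (hr a (huT ha)).1
  have hsub : ⋃ a ∈ T, ball (x a) (r a) ⊆ ⋃ b ∈ u, ball (x b) (τ * r b) :=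
    Set.iUnion₂_subset fun a ha =>
      let ⟨_, hb, hab⟩ := hcov a ha
      hab.trans (Set.subset_iUnion₂_of_subset _ hb subset_rfl)
  calc c * ν (⋃ a ∈ T, ball (x a) (r a))
      ≤ c * ∑' b : u, ν (ball (x b) (τ * r b)) := by
        gcongr
        exact (measure_mono hsub).trans (measure_biUnion_le ν hu _)
    _ = ∑' b : u, c * ν (ball (x b) (τ * r b)) := ENNReal.tsum_mul_left.symm
    _ ≤ ∑' b : u, μ (ball (x b) (r b)) := ENNReal.tsum_le_tsum fun b => h b (huT b.2)
    _ = μ (⋃ b ∈ u, ball (x b) (r b)) :=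
        (measure_biUnion hu hdisj fun _ _ => measurableSet_ball).symm
    _ ≤ μ (⋃ a ∈ T, ball (x a) (r a)) := measure_mono (Set.biUnion_subset_biUnion_left huT)

/-- The union of the balls `B` with centre in `S` and radius at most `R` on which the mean density
of `μ` with respect to `ν` exceeds `c`, written `c * ν B < μ B`. It contains the points of `S` at
which the centred maximal function of `μ`, restricted to radii at most `R`, exceeds `c`. -/
def highDensityUnion (μ ν : Measure X) (c : ℝ≥0∞) (S : Set X) (R : ℝ) : Set X :=
  ⋃ p ∈ {p : X × ℝ | p.1 ∈ S ∧ p.2 ∈ Set.Ioc 0 R ∧ c * ν (ball p.1 p.2) < μ (ball p.1 p.2)},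
    ball p.1 p.2

section HighDensityUnion

variable {μ ν : Measure X} {c : ℝ≥0∞} {S : Set X} {R : ℝ}

theorem isOpen_highDensityUnion : IsOpen (highDensityUnion μ ν c S R) :=
  isOpen_biUnion fun _ _ => isOpen_ball

theorem highDensityUnion_closedBall_subset_ball {z : X} {r : ℝ} :
    highDensityUnion μ ν c (closedBall z r) R ⊆ ball z (R + r) :=
  Set.iUnion₂_subset fun _ ⟨hz, hR, _⟩ => ball_subset_ball' (add_le_add hR.2 hz)

theorem measure_ball_le_of_notMem_highDensityUnion {x : X} (hxS : x ∈ S)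
    (hx : x ∉ highDensityUnion μ ν c S R) {t : ℝ} (ht : 0 < t) (htR : t ≤ R) :
    μ (ball x t) ≤ c * ν (ball x t) := by
  by_contra! hlt
  exact hx (Set.mem_biUnion (x := (x, t)) ⟨hxS, ⟨ht, htR⟩, hlt⟩ (mem_ball_self ht))

theorem IsDoublingOn.mul_measure_highDensityUnion_le [OpensMeasurableSpace X]
    [TopologicalSpace.SeparableSpace X] {A : ℝ≥0∞} (hν : IsDoublingOn ν A S (2 * R)) :
    c * ν (highDensityUnion μ ν c S R) ≤ A ^ 2 * μ (highDensityUnion μ ν c S R) := by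
  refine mul_measure_biUnion_ball_le_of_enlargement (μ := A ^ 2 • μ) (τ := 2 ^ 2) (by norm_num)
    (fun _ hp => hp.2.1) ?_
  rintro ⟨x, t⟩ ⟨hxS, ⟨ht, htR⟩, hlt⟩
  calc c * ν (ball x (2 ^ 2 * t)) ≤ c * (A ^ 2 * ν (ball x t)) := by
        gcongr
        exact hν.measure_ball_two_pow_mul_le hxS ht 2 (by linarith)
    _ = A ^ 2 * (c * ν (ball x t)) := mul_left_comm _ _ _
    _ ≤ A ^ 2 * μ (ball x t) := by gcongr

theorem IsDoublingOn.measure_highDensityUnion_le [OpensMeasurableSpace X]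
    [TopologicalSpace.SeparableSpace X] {A δ : ℝ≥0∞} {z : X} {r s : ℝ} {n : ℕ}
    (hν : IsDoublingOn ν A (ball z s) s) (hr : 0 < r) (hrs : 2 * r ≤ s)
    (hsr : s ≤ 2 ^ n * r) (hn : 2 ^ n * r ≤ 2 * s)
    (hμ : μ (ball z s) ≤ δ * ν (ball z s)) (hc : c ≠ 0) (hc' : c ≠ ∞)
    (hAc : A ^ (n + 2) * δ ≤ c ^ 2) :
    ν (highDensityUnion μ ν c (closedBall z r) r) ≤ c * ν (ball z r) := by
  set U := highDensityUnion μ ν c (closedBall z r) r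
  have hν' : IsDoublingOn ν A (closedBall z r) (2 * r) :=
    hν.mono (closedBall_subset_ball (by linarith)) hrs
  have hUs : U ⊆ ball z s :=
    highDensityUnion_closedBall_subset_ball.trans (ball_subset_ball (by linarith))
  have hzs : ν (ball z s) ≤ A ^ n * ν (ball z r) :=
    (measure_mono (ball_subset_ball hsr)).trans
      (hν.measure_ball_two_pow_mul_le (mem_ball_self (by linarith)) hr n hn)
  refine (ENNReal.mul_le_mul_iff_right hc hc').1 ?_
  calc c * ν U ≤ A ^ 2 * μ U := hν'.mul_measure_highDensityUnion_le
    _ ≤ A ^ 2 * μ (ball z s) := by gcongr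
    _ ≤ A ^ 2 * (δ * (A ^ n * ν (ball z r))) := by grw [hμ, hzs]
    _ = A ^ (n + 2) * δ * ν (ball z r) := by ring
    _ ≤ c ^ 2 * ν (ball z r) := by gcongr
    _ = c * (c * ν (ball z r)) := by ring

theorem exists_isCompact_forall_measure_ball_le [ProperSpace X] [IsFiniteMeasureOnCompacts ν]
    {z : X} {r : ℝ}
    (hU : ν (highDensityUnion μ ν c (closedBall z r) r) ≤ c * ν (ball z r)) :
    ∃ K ⊆ closedBall z r, IsCompact K ∧ (1 - c) * ν (ball z r) ≤ ν K ∧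
      ∀ x ∈ K, ∀ t : ℝ, 0 < t → t ≤ r → μ (ball x t) ≤ c * ν (ball x t) := by
  set U := highDensityUnion μ ν c (closedBall z r) r
  refine ⟨closedBall z r \ U, Set.sdiff_subset,
    (isCompact_closedBall z r).diff isOpen_highDensityUnion, ?_,
    fun x hx t => measure_ball_le_of_notMem_highDensityUnion hx.1 hx.2⟩
  calc (1 - c) * ν (ball z r) = ν (ball z r) - c * ν (ball z r) := by
        rw [ENNReal.sub_mul fun _ _ => measure_ball_lt_top.ne, one_mul]
    _ ≤ ν (closedBall z r) - ν U := by gcongr; exact ball_subset_closedBall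
    _ ≤ ν (closedBall z r \ U) := le_measure_sdiff

end HighDensityUnion

theorem telescope_lemma_general [ProperSpace X] [OpensMeasurableSpace X] {ν : Measure X}
    [IsFiniteMeasureOnCompacts ν] {κ : ℝ} {z : X} {s δ : ℝ}
    (hs : 0 < s) (hδ : 0 < δ) {F : X → ℝ≥0∞}
    (hF : (∫⁻ x in ball z s, F x ∂ν) ≤ ENNReal.ofReal δ * ν (ball z s))
    (hν : IsDoublingOn ν (ENNReal.ofReal (2 ^ κ)) (ball z s) s) :
    ∃ K ⊆ closedBall z (s / 100), IsCompact K ∧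
      ENNReal.ofReal (1 - 2 ^ (9 * κ / 2) * √δ) * ν (ball z (s / 100)) ≤ ν K ∧
      ∀ x ∈ K, ∀ t : ℝ, 0 < t → t ≤ s / 100 →
        (∫⁻ y in ball x t, F y ∂ν) ≤
          ENNReal.ofReal (2 ^ (9 * κ / 2) * √δ) * ν (ball x t) := by
  set c : ℝ := 2 ^ (9 * κ / 2) * √δ with hc
  have hc_pos : 0 < c := by positivity
  -- Seven doublings take the radius `s / 100` past `s`; two more enlarge the Vitali balls by `4`.
  have hc_sq : (2 ^ κ) ^ (7 + 2) * δ = c ^ 2 := by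
    rw [hc, mul_pow, Real.sq_sqrt hδ.le, ← Real.rpow_mul_natCast two_pos.le,
      ← Real.rpow_mul_natCast two_pos.le]
    ring_nf
  have hAc : ENNReal.ofReal (2 ^ κ) ^ (7 + 2) * ENNReal.ofReal δ ≤ ENNReal.ofReal c ^ 2 := by
    rw [← ENNReal.ofReal_pow (by positivity), ← ENNReal.ofReal_mul (by positivity), hc_sq,
      ENNReal.ofReal_pow hc_pos.le]
  have hμ : ν.withDensity F (ball z s) ≤ ENNReal.ofReal δ * ν (ball z s) := by
    rwa [withDensity_apply F measurableSet_ball]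
  have hU := hν.measure_highDensityUnion_le (r := s / 100) (n := 7) (by positivity) (by linarith)
    (by linarith) (by linarith) hμ (ENNReal.ofReal_pos.2 hc_pos).ne' ENNReal.ofReal_ne_top hAc
  simpa only [withDensity_apply F measurableSet_ball, ENNReal.ofReal_sub 1 hc_pos.le,
    ENNReal.ofReal_one] using exists_isCompact_forall_measure_ball_le hU

end PseudoMetric

/-- The telescope lemma (Lemma 3.1): on a proper geodesic metric space with a Radon
measure which is locally doubling on a ball `B_s(z)`, if a nonnegative Borel function
has small mean over `B_s(z)`, then on a compact subset of `\bar B_{s/100}(z)` of nearly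
full measure, all means of the function over small balls are small. -/
theorem telescope_lemma (κ : ℝ) (hκ : 1 ≤ κ) :
    ∃ C : ℝ, 0 < C ∧
      ∀ (X : Type) [MetricSpace X] [MeasurableSpace X] [BorelSpace X] [ProperSpace X],
        (∀ x y : X, ∃ γ : ℝ → X, γ 0 = x ∧ γ (dist x y) = y ∧
            ∀ s ∈ Set.Icc (0 : ℝ) (dist x y), ∀ t ∈ Set.Icc (0 : ℝ) (dist x y),
              dist (γ s) (γ t) = |s - t|) →
        ∀ (ν : Measure X), IsFiniteMeasureOnCompacts ν →
        ∀ (z : X) (s δ : ℝ), 0 < s → 0 < δ →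
        ∀ F : X → ℝ≥0∞, Measurable F →
        (∫⁻ x in ball z s, F x ∂ν) ≤ ENNReal.ofReal δ * ν (ball z s) →
        (∀ w ∈ ball z s, ∀ t : ℝ, 0 < t → t ≤ s →
          0 < ν (ball w (2 * t)) ∧
            ν (ball w (2 * t)) ≤ ENNReal.ofReal (2 ^ κ) * ν (ball w t)) →
        ∃ K : Set X, K ⊆ closedBall z (s / 100) ∧ IsCompact K ∧
          ENNReal.ofReal (1 - C * Real.sqrt δ) * ν (ball z (s / 100)) ≤ ν K ∧
          ∀ x ∈ K, ∀ t : ℝ, 0 < t → t ≤ s / 100 →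
            (∫⁻ y in ball x t, F y ∂ν) ≤
              ENNReal.ofReal (C * Real.sqrt δ) * ν (ball x t) := by
  exact ⟨2 ^ (9 * κ / 2), by positivity, fun X _ _ _ _ _ ν _ z s δ hs hδ F _ hF hν =>
    telescope_lemma_general hs hδ hF fun w hw t ht hts => (hν w hw t ht hts).2⟩
end

section
/- Let k, l ∈ ℕ with k ≥ 1 and let f_1, …, f_k : ℝ^l → ℝ be Lipschitz functions; by Rademacher's theorem each f_i is differentiable at Lebesgue-almost every point, and ∇f_i denotes its almost-everywhere defined gradient. Suppose ε ≥ 0 satisfies 2·k^3·ε < 1 and that for all 1 ≤ i, j ≤ k the averaged integral (1/L^l(B_1(0))) ∫_{B_1(0)} |⟨∇f_i(x), ∇f_j(x)⟩ − δ_{ij}| dL^l(x) ≤ ε, where L^l is the l-dimensional Lebesgue measure and B_1(0) ⊂ ℝ^l is the open unit ball. Then k ≤ l. -/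
open MeasureTheory Metric
open scoped ENNReal NNReal RealInnerProductSpace

/-!
If the Gram matrix of a family of vectors differs from the identity by less than `1` in every
absolute row sum, it is strictly diagonally dominant, hence invertible, and the vectors are
linearly independent. When the deviations of the Gram matrix of a family of vector fields have
total average less than `1`, this happens at some point. For `k` gradients the total average is at
most `k ^ 2 * ε`, so `k ^ 2 * ε < 1` yields `k` linearly independent vectors in the space.
-/

section

variable {𝕜 ι : Type*} [RCLike 𝕜] [Fintype ι] [DecidableEq ι]

theorem det_ne_zero_of_sum_row_norm_sub_one_lt_one {K : Type*} [NormedField K] {A : Matrix ι ι K}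
    (hA : ∀ i, ∑ j, ‖(A - 1) i j‖ < 1) : A.det ≠ 0 := by
  refine det_ne_zero_of_sum_row_lt_diag fun i ↦ ?_
  have diag_add_offDiag : ‖A i i - 1‖ + ∑ j ∈ Finset.univ.erase i, ‖A i j‖ < 1 := by
    calc ‖A i i - 1‖ + ∑ j ∈ Finset.univ.erase i, ‖A i j‖
        = ‖(A - 1) i i‖ + ∑ j ∈ Finset.univ.erase i, ‖(A - 1) i j‖ := by
          congr 1
          · simp
          · refine Finset.sum_congr rfl fun j hj ↦ ?_
            simp [Matrix.one_apply_ne (Finset.ne_of_mem_erase hj).symm]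
      _ = ∑ j, ‖(A - 1) i j‖ := Finset.add_sum_erase _ (fun j ↦ ‖(A - 1) i j‖) (Finset.mem_univ i)
      _ < 1 := hA i
  have one_le_diag_add : 1 ≤ ‖A i i‖ + ‖A i i - 1‖ := by
    simpa using norm_sub_le (A i i) (A i i - 1)
  linarith

section

variable {E : Type*} [NormedAddCommGroup E] [InnerProductSpace 𝕜 E]

theorem linearIndependent_of_sum_row_norm_gram_sub_one_lt_one {v : ι → E}
    (hv : ∀ i, ∑ j, ‖(Matrix.gram 𝕜 v - 1) i j‖ < 1) : LinearIndependent 𝕜 v :=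
  Matrix.linearIndependent_of_det_gram_ne_zero (det_ne_zero_of_sum_row_norm_sub_one_lt_one hv)

theorem linearIndependent_of_sum_enorm_gram_sub_one_lt_one {v : ι → E}
    (hv : ∑ i, ∑ j, ‖(Matrix.gram 𝕜 v - 1) i j‖ₑ < 1) : LinearIndependent 𝕜 v := by
  refine linearIndependent_of_sum_row_norm_gram_sub_one_lt_one fun i ↦ ?_
  have row_lt_one : ∑ j, ‖(Matrix.gram 𝕜 v - 1) i j‖ₑ < 1 :=
    (Finset.single_le_sum_of_canonicallyOrdered (Finset.mem_univ i)).trans_lt hv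
  simp only [enorm_eq_nnnorm] at row_lt_one
  simp only [← coe_nnnorm]
  exact_mod_cast row_lt_one

theorem frequently_linearIndependent_of_sum_lintegral_enorm_gram_sub_one_lt {α : Type*}
    [MeasurableSpace α] {μ : Measure α} {v : ι → α → E} (hv : ∀ i, AEStronglyMeasurable (v i) μ)
    (h : ∑ i, ∑ j, ∫⁻ x, ‖(Matrix.gram 𝕜 (v · x) - 1) i j‖ₑ ∂μ < μ Set.univ) :
    ∃ᵐ x ∂μ, LinearIndependent 𝕜 (v · x) := by
  have aemeasurable_entry (i j : ι) :
      AEMeasurable (fun x ↦ ‖(Matrix.gram 𝕜 (v · x) - 1) i j‖ₑ) μ :=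
    (((hv i).inner (hv j)).sub aestronglyMeasurable_const).enorm
  contrapose! h
  calc μ Set.univ = ∫⁻ _, 1 ∂μ := lintegral_one.symm
    _ ≤ ∫⁻ x, ∑ i, ∑ j, ‖(Matrix.gram 𝕜 (v · x) - 1) i j‖ₑ ∂μ :=
      lintegral_mono_ae <| h.mono fun _ hx ↦
        not_lt.mp (mt linearIndependent_of_sum_enorm_gram_sub_one_lt_one hx)
    _ = ∑ i, ∑ j, ∫⁻ x, ‖(Matrix.gram 𝕜 (v · x) - 1) i j‖ₑ ∂μ := by
      rw [lintegral_finsetSum' _ fun i _ ↦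
        Finset.aemeasurable_fun_sum _ fun j _ ↦ aemeasurable_entry i j]
      exact Finset.sum_congr rfl fun i _ ↦ lintegral_finsetSum' _ fun j _ ↦ aemeasurable_entry i j

theorem frequently_linearIndependent_of_lintegral_enorm_gram_sub_one_le {α : Type*}
    [MeasurableSpace α] {μ : Measure α} [IsFiniteMeasure μ] [NeZero μ] {v : ι → α → E} {ε : ℝ}
    (hv : ∀ i, AEStronglyMeasurable (v i) μ) (hε : (Fintype.card ι : ℝ) ^ 2 * ε < 1)
    (h : ∀ i j, ∫⁻ x, ‖(Matrix.gram 𝕜 (v · x) - 1) i j‖ₑ ∂μ ≤ ENNReal.ofReal ε * μ Set.univ) :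
    ∃ᵐ x ∂μ, LinearIndependent 𝕜 (v · x) := by
  refine frequently_linearIndependent_of_sum_lintegral_enorm_gram_sub_one_lt hv ?_
  calc ∑ i, ∑ j, ∫⁻ x, ‖(Matrix.gram 𝕜 (v · x) - 1) i j‖ₑ ∂μ
      ≤ ∑ _i : ι, ∑ _j : ι, ENNReal.ofReal ε * μ Set.univ :=
        Finset.sum_le_sum fun i _ ↦ Finset.sum_le_sum fun j _ ↦ h i j
    _ = ENNReal.ofReal ((Fintype.card ι : ℝ) ^ 2 * ε) * μ Set.univ := by
        simp [ENNReal.ofReal_mul, sq, mul_assoc]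
    _ < 1 * μ Set.univ := by
        gcongr
        · simp [NeZero.ne μ]
        · finiteness
        · exact ENNReal.ofReal_lt_one.mpr hε
    _ = μ Set.univ := one_mul _

end

theorem measurable_gradient {E : Type*} [NormedAddCommGroup E] [InnerProductSpace 𝕜 E]
    [CompleteSpace E] [MeasurableSpace E] [BorelSpace E] (f : E → 𝕜) : Measurable (gradient f) :=
  (InnerProductSpace.toDual 𝕜 E).symm.continuous.measurable.comp (measurable_fderiv 𝕜 f)

-- Where `f i` is not differentiable, `gradient (f i)` is `0` and the `(i, i)` integrand is `1`:
-- such points count against the bound.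
theorem card_le_dim_of_almost_orthonormal_gradients_general {E : Type*} [NormedAddCommGroup E]
    [InnerProductSpace ℝ E] [FiniteDimensional ℝ E] [MeasurableSpace E] [BorelSpace E]
    {μ : Measure E} [IsFiniteMeasure μ] [NeZero μ] {f : ι → E → ℝ} {ε : ℝ}
    (hε : (Fintype.card ι : ℝ) ^ 2 * ε < 1)
    (h : ∀ i j, ∫⁻ x, ENNReal.ofReal
        |⟪gradient (f i) x, gradient (f j) x⟫ - (if i = j then (1 : ℝ) else 0)| ∂μ
      ≤ ENNReal.ofReal ε * μ Set.univ) :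
    Fintype.card ι ≤ Module.finrank ℝ E := by
  have frequently_linearIndependent : ∃ᵐ x ∂μ, LinearIndependent ℝ fun i ↦ gradient (f i) x :=
    frequently_linearIndependent_of_lintegral_enorm_gram_sub_one_le
      (fun i ↦ (measurable_gradient (f i)).aestronglyMeasurable) hε <| by
        simpa [Real.enorm_eq_ofReal_abs, Matrix.one_apply] using h
  obtain ⟨x, linearIndependent_gradients⟩ := frequently_linearIndependent.exists
  exact linearIndependent_gradients.fintype_card_le_finrank

end

/-- The Euclidean core of Proposition 3.5: if `k` Lipschitz functions on `ℝ^l` have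
gradients which are almost orthonormal in an averaged sense on the unit ball,
then `k ≤ l`. -/
theorem card_le_dim_of_almost_orthonormal_gradients
    (k l : ℕ) (hk : 1 ≤ k) (f : Fin k → EuclideanSpace ℝ (Fin l) → ℝ)
    (hf : ∀ i, ∃ L : ℝ≥0, LipschitzWith L (f i))
    (ε : ℝ) (hε : 0 ≤ ε) (hkε : 2 * (k : ℝ) ^ 3 * ε < 1)
    (h : ∀ i j : Fin k,
      (∫⁻ x in ball (0 : EuclideanSpace ℝ (Fin l)) 1,
          ENNReal.ofReal
            |⟪gradient (f i) x, gradient (f j) x⟫ - (if i = j then (1 : ℝ) else 0)|)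
        ≤ ENNReal.ofReal ε * volume (ball (0 : EuclideanSpace ℝ (Fin l)) 1)) :
    k ≤ l := by
  have sq_mul_lt_one : (k : ℝ) ^ 2 * ε < 1 := by
    have sq_le : (k : ℝ) ^ 2 ≤ 2 * (k : ℝ) ^ 3 := by
      exact_mod_cast
        (Nat.pow_le_pow_right hk (by norm_num)).trans (Nat.le_mul_of_pos_left _ two_pos)
    exact (mul_le_mul_of_nonneg_right sq_le hε).trans_lt hkε
  have : IsFiniteMeasure (volume.restrict (ball (0 : EuclideanSpace ℝ (Fin l)) 1)) :=
    isFiniteMeasure_restrict.mpr measure_ball_lt_top.ne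
  have : NeZero (volume.restrict (ball (0 : EuclideanSpace ℝ (Fin l)) 1)) :=
    ⟨Measure.restrict_eq_zero.not.mpr (measure_ball_pos volume _ one_pos).ne'⟩
  simpa using card_le_dim_of_almost_orthonormal_gradients_general
    (μ := volume.restrict (ball 0 1)) (f := f) (by simpa using sq_mul_lt_one) (by simpa using h)
end
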